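/- For every z > 0 and every n ≥ 1, the monic orthogonal polynomials for the weight e^{−x⁴} on [−z, z] satisfy the differential-difference relation (x² − z²)·P′_n(x) = 4γ_n·𝒜_n(x)·P_{n−1}(x) − ℬ_n(x)·P_n(x) (as an identity of polynomials), and moreover ℬ_n(x) + ℬ_{n+1}(x) = 4x·( 𝒜_n(x) − x²·(x² − z²) ), where 𝒜_n(x) = γ_{n+1}(γ_{n+2} + γ_{n+1} + γ_n) + γ_n(γ_{n+1} + γ_n + γ_{n−1}) + (x² − z²)(x² + γ_{n+1} + γ_n) − n/2 − 1/4 and ℬ_n(x) = x·[ 4γ_n·(γ_{n+1} + γ_n + γ_{n−1} + x² − z²) − n ]. -/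

import Mathlib

open Polynomial

/-- integration against the truncated Freud weight, as a linear functional -/
noncomputable def freudL (z : ℝ) : ℝ[X] →ₗ[ℝ] ℝ where
  toFun p := ∫ x in (-z)..z, p.eval x * Real.exp (-x ^ 4)
  map_add' p q := by
    rw [← intervalIntegral.integral_add]
    · simp only [eval_add, add_mul]
    · exact Continuous.intervalIntegrable (by fun_prop) _ _
    · exact Continuous.intervalIntegrable (by fun_prop) _ _
  map_smul' c p := by
    simp only [eval_smul, smul_eq_mul, RingHom.id_apply, mul_assoc]
    rw [intervalIntegral.integral_const_mul]

lemma freudL_apply (z : ℝ) (p : ℝ[X]) :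
    freudL z p = ∫ x in (-z)..z, p.eval x * Real.exp (-x ^ 4) := rfl

lemma freudL_C_mul (z c : ℝ) (p : ℝ[X]) : freudL z (C c * p) = c * freudL z p := by
  rw [← smul_eq_C_mul, map_smul, smul_eq_mul]

/-- integration by parts -/
lemma freudL_parts (z : ℝ) (p : ℝ[X]) :
    freudL z ((X ^ 2 - C (z ^ 2)) * derivative p)
      = freudL z ((-(2 * X) + 4 * X ^ 3 * (X ^ 2 - C (z ^ 2))) * p) := by
  rw [← sub_eq_zero, ← map_sub, freudL_apply]
  have key : ∀ x ∈ Set.uIcc (-z) z, HasDerivAt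
      (fun x : ℝ => ((X ^ 2 - C (z ^ 2)) * p).eval x * Real.exp (-x ^ 4))
      (((X ^ 2 - C (z ^ 2)) * derivative p -
        (-(2 * X) + 4 * X ^ 3 * (X ^ 2 - C (z ^ 2))) * p).eval x * Real.exp (-x ^ 4)) x := by
    intro x _
    have h1 := ((X ^ 2 - C (z ^ 2)) * p).hasDerivAt x
    have h2 : HasDerivAt (fun x : ℝ => Real.exp (-x ^ 4))
        (Real.exp (-x ^ 4) * (-(4 * x ^ 3))) x := by
      have := ((hasDerivAt_pow 4 x).neg).exp
      simpa using this
    refine (h1.mul h2).congr_deriv ?_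
    simp [derivative_mul, -C_pow, -map_pow]
    ring
  rw [intervalIntegral.integral_eq_sub_of_hasDerivAt key
    (Continuous.intervalIntegrable (by fun_prop) _ _)]
  simp

lemma freudL_low (z : ℝ) (P : ℕ → ℝ[X]) (hmonic : ∀ n, (P n).Monic)
    (hdeg : ∀ n, (P n).natDegree = n)
    (ho : ∀ m n, m ≠ n → freudL z (P m * P n) = 0) (n : ℕ) :
    ∀ d, d ≤ n → ∀ q : ℝ[X], q.degree < d → freudL z (q * P n) = 0 := by
  intro d
  induction d with
  | zero =>
    intro _ q hq
    have : q = 0 := by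
      rw [← degree_eq_bot]
      exact Nat.WithBot.lt_zero_iff.1 (by simpa using hq)
    simp [this]
  | succ d ih =>
    intro hd q hq
    have e : q = (q - C (q.coeff d) * P d) + C (q.coeff d) * P d := by ring
    rw [e, add_mul, map_add, mul_assoc, freudL_C_mul, ho d n (by omega), ih (by omega)]
    · simp
    rw [degree_lt_iff_coeff_zero] at hq ⊢
    intro m hm
    rcases Nat.eq_or_lt_of_le hm with rfl | hm
    · have := (hmonic d).coeff_natDegree
      rw [hdeg] at this
      simp [this]
    · have : (P d).coeff m = 0 := coeff_eq_zero_of_natDegree_lt (by rw [hdeg]; exact hm)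
      simp [this, hq m hm]

lemma freudL_top (z : ℝ) (P : ℕ → ℝ[X]) (hmonic : ∀ n, (P n).Monic)
    (hdeg : ∀ n, (P n).natDegree = n)
    (ho : ∀ m n, m ≠ n → freudL z (P m * P n) = 0) (n : ℕ)
    (q : ℝ[X]) (hq : q.natDegree ≤ n) :
    freudL z (q * P n) = q.coeff n * freudL z (P n * P n) := by
  have e : q = (q - C (q.coeff n) * P n) + C (q.coeff n) * P n := by ring
  have h0 : freudL z ((q - C (q.coeff n) * P n) * P n) = 0 := by
    apply freudL_low z P hmonic hdeg ho n n le_rfl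
    rw [degree_lt_iff_coeff_zero]
    intro m hm
    rcases Nat.eq_or_lt_of_le hm with rfl | hm
    · have := (hmonic n).coeff_natDegree
      rw [hdeg] at this
      simp [this]
    · have : (P n).coeff m = 0 := coeff_eq_zero_of_natDegree_lt (by rw [hdeg]; exact hm)
      simp [this, coeff_eq_zero_of_natDegree_lt (lt_of_le_of_lt hq hm)]
  conv_lhs => rw [e, add_mul, map_add, h0, mul_assoc, freudL_C_mul]
  simp

/-- Differential-difference (ladder) relation
`(x²-z²)·P'_n = 4γ_n·𝒜_n·P_{n-1} - ℬ_n·P_n` together with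
`ℬ_n + ℬ_{n+1} = 4x(𝒜_n - x²(x²-z²))` for the monic orthogonal polynomials for
the weight `e^{-x⁴}` on `[-z, z]`. -/
theorem truncated_freud_ladder_relation (z : ℝ) (hz : 0 < z)
    (P : ℕ → Polynomial ℝ) (γ h : ℕ → ℝ)
    (hmonic : ∀ n, (P n).Monic)
    (hdeg : ∀ n, (P n).natDegree = n)
    (horth : ∀ m n, m ≠ n →
      ∫ x in (-z)..z, (P m).eval x * (P n).eval x * Real.exp (-x ^ 4) = 0)
    (hh : ∀ n, h n = ∫ x in (-z)..z, ((P n).eval x) ^ 2 * Real.exp (-x ^ 4))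
    (hhpos : ∀ n, 0 < h n)
    (hP0 : P 0 = 1) (hP1 : P 1 = Polynomial.X)
    (hrec : ∀ n, Polynomial.X * P (n + 1) = P (n + 2) + Polynomial.C (γ (n + 1)) * P n)
    (hγ0 : γ 0 = 0)
    (hγ : ∀ n, γ (n + 1) = h (n + 1) / h n)
    (A B : ℕ → Polynomial ℝ)
    (hA : ∀ m, A m =
      C (γ (m + 1) * (γ (m + 2) + γ (m + 1) + γ m)
          + γ m * (γ (m + 1) + γ m + γ (m - 1)) - (m : ℝ) / 2 - 1 / 4)
        + (X ^ 2 - C (z ^ 2)) * (X ^ 2 + C (γ (m + 1) + γ m)))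
    (hB : ∀ m, B m =
      X * (C (4 * γ m) * (X ^ 2 + C (γ (m + 1) + γ m + γ (m - 1) - z ^ 2)) - C (m : ℝ)))
    (n : ℕ) (hn : 1 ≤ n) :
    (X ^ 2 - C (z ^ 2)) * derivative (P n) = C (4 * γ n) * A n * P (n - 1) - B n * P n
    ∧ B n + B (n + 1) = C 4 * X * (A n - X ^ 2 * (X ^ 2 - C (z ^ 2))) := by
  have ho : ∀ m n, m ≠ n → freudL z (P m * P n) = 0 := by
    intro m n hmn
    rw [freudL_apply]
    simpa only [eval_mul] using horth m n hmn
  have hL : ∀ n, freudL z (P n * P n) = h n := by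
    intro n
    rw [freudL_apply, hh]
    simp only [eval_mul, sq]
  refine ⟨?_, ?_⟩
  swap
  · rw [hA, hB, hB]
    have e1 : C ((n : ℝ) / 2) = C (1 / 2) * C (n : ℝ) := by rw [← C_mul]; congr 1; ring
    have e2 : (4 : ℝ[X]) * C (1 / 2) = 2 := by
      rw [← C_ofNat 4, ← C_mul, ← C_ofNat 2]; congr 1; norm_num
    have e3 : (4 : ℝ[X]) * C (1 / 4) = 1 := by
      rw [← C_ofNat 4, ← C_mul, ← C_1]; congr 1; norm_num
    simp only [Nat.add_sub_cancel, Nat.cast_add, Nat.cast_one, C_add, C_sub, C_mul, C_1,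
      C_ofNat, C_pow, e1]
    simp only [show n + 1 + 1 = n + 2 from rfl]
    linear_combination X * C (n : ℝ) * e2 + X * e3
  -- recurrence with truncated subtraction
  have hrc : ∀ k, X * P k = P (k + 1) + C (γ k) * P (k - 1) := by
    intro k
    rcases k with _ | k
    · simp [hP0, hP1, hγ0]
    · exact hrec k
  have hrc2 : ∀ k, X * (C (γ k) * P (k - 1)) =
      C (γ k) * P k + C (γ k) * C (γ (k - 1)) * P (k - 1 - 1) := by
    intro k
    rcases k with _ | k
    · simp [hγ0]
    · have := hrc k
      simp only [Nat.add_sub_cancel]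
      linear_combination C (γ (k + 1)) * this
  obtain ⟨G1, hG1⟩ : ∃ G, G = C (γ n) * P (n - 1) := ⟨_, rfl⟩
  obtain ⟨G2, hG2⟩ : ∃ G, G = C (γ n * γ (n - 1)) * P (n - 2) := ⟨_, rfl⟩
  obtain ⟨G3, hG3⟩ : ∃ G, G = C (γ n * γ (n - 1) * γ (n - 2)) * P (n - 3) := ⟨_, rfl⟩
  obtain ⟨G4, hG4⟩ : ∃ G, G = C (γ n * γ (n - 1) * γ (n - 2) * γ (n - 3)) * P (n - 4) := ⟨_, rfl⟩
  obtain ⟨G5, hG5⟩ : ∃ G, G =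
    C (γ n * γ (n - 1) * γ (n - 2) * γ (n - 3) * γ (n - 4)) * P (n - 5) := ⟨_, rfl⟩
  have r1 : P (n + 1) = X * P n - G1 := by rw [hG1, hrc n]; ring
  have r2 : P (n + 2) = X * P (n + 1) - C (γ (n + 1)) * P n := by rw [hrec n]; ring
  have r3 : P (n + 3) = X * P (n + 2) - C (γ (n + 2)) * P (n + 1) := by rw [hrec (n + 1)]; ring
  have r4 : P (n + 4) = X * P (n + 3) - C (γ (n + 3)) * P (n + 2) := by rw [hrec (n + 2)]; ring
  have r5 : P (n + 5) = X * P (n + 4) - C (γ (n + 4)) * P (n + 3) := by rw [hrec (n + 3)]; ring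
  have s2 : G2 = X * G1 - C (γ n) * P n := by
    rw [hG1, hrc2, hG2, C_mul, show n - 1 - 1 = n - 2 by omega]; ring
  have s3 : G3 = X * G2 - C (γ (n - 1)) * G1 := by
    have := hrc2 (n - 1)
    rw [show n - 1 - 1 = n - 2 by omega, show n - 2 - 1 = n - 3 by omega] at this
    rw [hG1, hG2, hG3]; simp only [C_mul]
    linear_combination (-C (γ n)) * this
  have s4 : G4 = X * G3 - C (γ (n - 2)) * G2 := by
    have := hrc2 (n - 2)
    rw [show n - 2 - 1 = n - 3 by omega, show n - 3 - 1 = n - 4 by omega] at this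
    rw [hG2, hG3, hG4]; simp only [C_mul]
    linear_combination (-C (γ n) * C (γ (n - 1))) * this
  have s5 : G5 = X * G4 - C (γ (n - 3)) * G3 := by
    have := hrc2 (n - 3)
    rw [show n - 3 - 1 = n - 4 by omega, show n - 4 - 1 = n - 5 by omega] at this
    rw [hG3, hG4, hG5]; simp only [C_mul]
    linear_combination (-C (γ n) * C (γ (n - 1)) * C (γ (n - 2))) * this
  obtain ⟨d1, hd1⟩ : ∃ d, d = γ (n+2) * γ (n+1) + γ (n+1) * γ (n+1) + γ (n+1) * γ n
    + γ (n+1) * γ (n-1) + γ n * γ (n+1) + γ n * γ n + γ n * γ (n-1) + γ (n-1) * γ n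
    + γ (n-1) * γ (n-1) + γ (n-1) * γ (n-2) - z^2 * (γ (n-1) + γ n + γ (n+1)) := ⟨_, rfl⟩
  obtain ⟨d3, hd3⟩ : ∃ d, d = γ (n-3) + γ (n-2) + γ (n-1) + γ n + γ (n+1) - z^2 := ⟨_, rfl⟩
  obtain ⟨u3, hu3⟩ : ∃ d, d = γ n + γ (n+1) + γ (n+2) + γ (n+3) + γ (n+4) - z^2 := ⟨_, rfl⟩
  obtain ⟨u1, hu1⟩ : ∃ d, d = γ n * γ (n-1) + γ n * γ n + γ n * γ (n+1) + γ n * γ (n+2)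
    + γ (n+1) * γ n + γ (n+1) * γ (n+1) + γ (n+1) * γ (n+2) + γ (n+2) * γ (n+1)
    + γ (n+2) * γ (n+2) + γ (n+3) * γ (n+2) - z^2 * (γ n + γ (n+1) + γ (n+2)) := ⟨_, rfl⟩
  obtain ⟨T, hT⟩ : ∃ T, T = C (n : ℝ) * P (n + 1) + C (4 * d1 - n - 1) * G1
    + C (4 * d3) * G3 + C 4 * G5 := ⟨_, rfl⟩
  have I1 : C (4 * γ n) * A n * P (n - 1) - B n * P n = T := by
    have e0 : C (4 * γ n) * A n * P (n - 1) = (C 4 * A n) * G1 := by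
      rw [hG1, C_mul]; ring
    have e1 : C ((n : ℝ) / 2) = C (1 / 2) * C (n : ℝ) := by rw [← C_mul]; congr 1; ring
    have e2 : (4 : ℝ[X]) * C (1 / 2) = 2 := by
      rw [← C_ofNat 4, ← C_mul, ← C_ofNat 2]; congr 1; norm_num
    have e3 : (4 : ℝ[X]) * C (1 / 4) = 1 := by
      rw [← C_ofNat 4, ← C_mul, ← C_1]; congr 1; norm_num
    rw [e0, hA, hB, hT, s5, s4, s3, s2, r1, hd1, hd3]
    simp only [C_add, C_sub, C_mul, C_1, C_ofNat, C_pow, e1]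
    linear_combination (-C (n : ℝ) * G1) * e2 - G1 * e3
  have I2 : (-(2 * X) + 4 * X ^ 3 * (X ^ 2 - C (z ^ 2))) * P n =
      C (4 * u1 - 2 - n) * P (n + 1) + C (4 * u3) * P (n + 3) + C 4 * P (n + 5)
      + T + C ((n : ℝ) - 1) * G1 := by
    rw [hT, r5, r4, r3, r2, r1, s5, s4, s3, s2, hd1, hd3, hu1, hu3]
    simp only [C_add, C_sub, C_mul, C_1, C_ofNat, C_pow]
    ring
  have gG1 : ∀ k, k ≤ n → freudL z (P k * G1) = if k = n - 1 then h n else 0 := by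
    intro k hk
    rw [hG1, mul_left_comm, freudL_C_mul]
    split_ifs with hkn
    · rw [hkn, hL]
      obtain ⟨m, rfl⟩ : ∃ m, n = m + 1 := ⟨n - 1, by omega⟩
      have := (hhpos m).ne'
      rw [hγ, Nat.add_sub_cancel]
      field_simp
    · rw [ho _ _ hkn, mul_zero]
  have hTn : freudL z (P n * T) = 0 := by
    rw [hT, hG1, hG3, hG5]
    simp only [mul_add, map_add, mul_left_comm (P n), freudL_C_mul]
    rw [ho n (n + 1) (by omega), ho n (n - 1) (by omega), ho n (n - 3) (by omega),
      ho n (n - 5) (by omega)]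
    simp
  have hV : ∀ k, k ≤ n → freudL z ((-(2 * X) + 4 * X ^ 3 * (X ^ 2 - C (z ^ 2))) * (P k * P n))
      = freudL z (P k * T) + ((n : ℝ) - 1) * freudL z (P k * G1) := by
    intro k hk
    rw [mul_left_comm, I2]
    simp only [mul_add, map_add, mul_left_comm (P k), freudL_C_mul]
    rw [ho k (n + 1) (by omega), ho k (n + 3) (by omega), ho k (n + 5) (by omega)]
    simp
  -- degree bounds
  have degD : ∀ k : ℕ, ((X ^ 2 - C (z ^ 2)) * derivative (P k)).natDegree ≤ k + 1 ∧
      ((X ^ 2 - C (z ^ 2)) * derivative (P k)).coeff (k + 1) = (k : ℝ) := by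
    intro k
    rcases k with _ | k
    · simp [hP0]
    have hd : (derivative (P (k + 1))).natDegree ≤ k := by
      have := natDegree_derivative_le (P (k + 1))
      rw [hdeg] at this
      simpa using this
    have h2 : (X ^ 2 - C (z ^ 2)).natDegree ≤ 2 := by compute_degree
    constructor
    · refine natDegree_mul_le.trans ?_
      omega
    · rw [show k + 1 + 1 = 2 + k by ring, coeff_mul_add_eq_of_natDegree_le h2 hd,
        coeff_derivative]
      have := (hmonic (k + 1)).coeff_natDegree
      rw [hdeg] at this
      rw [this]
      simp [coeff_X_pow, coeff_C, -C_pow, -map_pow]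
  have main : ∀ k, k ≤ n → freudL z (P k * ((X ^ 2 - C (z ^ 2)) * derivative (P n)))
      = freudL z (P k * T) := by
    intro k hk
    have hp := freudL_parts z (P k * P n)
    rw [hV k hk, derivative_mul, gG1 k hk,
      show (X ^ 2 - C (z ^ 2)) * (derivative (P k) * P n + P k * derivative (P n))
        = (X ^ 2 - C (z ^ 2)) * derivative (P k) * P n
          + P k * ((X ^ 2 - C (z ^ 2)) * derivative (P n)) by ring, map_add] at hp
    rcases Nat.lt_or_ge k n with hkn | hkn
    · rw [freudL_top z P hmonic hdeg ho n _ ((degD k).1.trans hkn), hL] at hp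
      by_cases hk1 : k = n - 1
      · have hn1 : n = k + 1 := by omega
        have hc := (degD k).2
        rw [← hn1] at hc
        rw [hc, if_pos hk1] at hp
        have : (n : ℝ) = k + 1 := by rw [hn1]; push_cast; ring
        rw [this] at hp
        linarith
      · rw [coeff_eq_zero_of_natDegree_lt (lt_of_le_of_lt (degD k).1 (by omega)),
          if_neg hk1] at hp
        linarith
    · have : k = n := by omega
      subst this
      rw [if_neg (by omega), hTn,
        show (X ^ 2 - C (z ^ 2)) * derivative (P k) * P k
          = P k * ((X ^ 2 - C (z ^ 2)) * derivative (P k)) by ring] at hp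
      rw [hTn]
      linarith
  rw [I1, ← sub_eq_zero]
  by_contra hQ
  have cP : (P (n + 1)).coeff (n + 1) = 1 := by
    have := (hmonic (n + 1)).coeff_natDegree
    rwa [hdeg] at this
  have zP : ∀ i m, i < m → (P i).coeff m = 0 := fun i m him =>
    coeff_eq_zero_of_natDegree_lt (by rw [hdeg]; exact him)
  have hlt : ((X ^ 2 - C (z ^ 2)) * derivative (P n) - T).degree < ((n + 1 : ℕ) : WithBot ℕ) := by
    rw [degree_lt_iff_coeff_zero]
    intro m hm
    rw [hT, hG1, hG3, hG5]
    simp only [coeff_sub, coeff_add, coeff_C_mul]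
    rw [zP (n - 1) m (by omega), zP (n - 3) m (by omega), zP (n - 5) m (by omega)]
    rcases Nat.eq_or_lt_of_le hm with rfl | hm
    · rw [(degD n).2, cP]; simp
    · rw [zP _ _ hm, coeff_eq_zero_of_natDegree_lt (lt_of_le_of_lt (degD n).1 hm)]; simp
  have hnd : ((X ^ 2 - C (z ^ 2)) * derivative (P n) - T).natDegree ≤ n :=
    Nat.lt_succ_iff.1 ((natDegree_lt_iff_degree_lt hQ).2 hlt)
  have e := freudL_top z P hmonic hdeg ho _ _ (le_refl
    ((X ^ 2 - C (z ^ 2)) * derivative (P n) - T).natDegree)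
  rw [hL, mul_comm, mul_sub, map_sub, main _ hnd, sub_self] at e
  exact mul_ne_zero (leadingCoeff_ne_zero.2 hQ) (hhpos _).ne' e.symm
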